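/- Let {U(S)} be the NTU LP game given by A, {b^i}, and {v^i} on a finite nonempty player set N, with each X({i}) nonempty and bounded. If v^i ≥ 0 (componentwise) for every i ∈ N, then the game is balanced (⋂_{S∈𝒮} U(S) ⊆ U(N) for every balanced collection 𝒮) and the core C(N) is nonempty. -/

import Mathlib

open Finset

/-- The design space `X(S)` of a coalition `S` in an NTU LP game. -/
def designSpace {K J N : Type*} [Fintype J] (A : K → J → ℝ) (b : N → K → ℝ)
    (S : Finset N) : Set (J → ℝ) :=
  {x | (∀ j, 0 ≤ x j) ∧ ∀ k, (∑ j, A k j * x j) ≤ ∑ i ∈ S, b i k}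

/-- The utility space `U(S)` of a coalition `S`. -/
def utilitySpace {K J N : Type*} [Fintype J] (A : K → J → ℝ) (b : N → K → ℝ)
    (v : N → J → ℝ) (S : Finset N) : Set (N → ℝ) :=
  {u | ∃ x ∈ designSpace A b S, ∀ i ∈ S, u i ≤ ∑ j, v i j * x j}

/-- The core `C(N) = U(N) \ ⋃_{∅ ≠ S ⊆ N} int U(S)` of an NTU LP game. -/
def core {K J N : Type*} [Fintype J] [Fintype N] (A : K → J → ℝ) (b : N → K → ℝ)
    (v : N → J → ℝ) : Set (N → ℝ) :=
  utilitySpace A b v Finset.univ \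
    ⋃ (S : Finset N) (_ : S.Nonempty), interior (utilitySpace A b v S)

/-- Over `ZMod 2`, a family of `m`-sets that is a cycle and one that is a cocycle meet evenly. -/
theorem even_card_inter_of_even_walls {T : Type*} [Fintype T] [DecidableEq T] [Nonempty T]
    {m : ℕ} {𝒟 ℬ : Finset (Finset T)}
    (hD : ∀ D ∈ 𝒟, #D = m) (hB : ∀ B ∈ ℬ, #B = m)
    (hW : ∀ W : Finset T, #W + 1 = m → Even #{D ∈ 𝒟 | W ⊆ D})
    (hF : ∀ F : Finset T, #F = m + 1 → Even #{B ∈ ℬ | B ⊆ F}) :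
    Even #(𝒟 ∩ ℬ) := by
  obtain ⟨t⟩ := ‹Nonempty T›
  have h1 : ∑ D ∈ 𝒟, ∑ B ∈ ℬ, (if t ∉ D ∧ B ⊆ insert t D then (1 : ZMod 2) else 0) = 0 := by
    refine Finset.sum_eq_zero fun D hDm => ?_
    by_cases ht : t ∈ D
    · simp [ht]
    · simp only [ht, not_false_eq_true, true_and, Finset.sum_boole]
      exact (ZMod.natCast_eq_zero_iff_even).2 (hF _ (by rw [card_insert_of_notMem ht, hD D hDm]))
  have h2 : ∑ B ∈ ℬ, ∑ D ∈ 𝒟, (if t ∈ B ∧ B.erase t ⊆ D then (1 : ZMod 2) else 0) = 0 := by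
    refine Finset.sum_eq_zero fun B hBm => ?_
    by_cases ht : t ∈ B
    · simp only [ht, true_and, Finset.sum_boole]
      exact (ZMod.natCast_eq_zero_iff_even).2 (hW _ (by rw [card_erase_add_one ht, hB B hBm]))
    · simp [ht]
  have h3 : ∀ D ∈ 𝒟, ∀ B ∈ ℬ, (if t ∉ D ∧ B ⊆ insert t D then (1 : ZMod 2) else 0)
      + (if t ∈ B ∧ B.erase t ⊆ D then (1 : ZMod 2) else 0) = if D = B then 1 else 0 := by
    intro D hDm B hBm
    have hsub : B ⊆ D ↔ D = B :=
      ⟨fun h => (eq_of_subset_of_card_le h (by rw [hD D hDm, hB B hBm])).symm,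
        fun h => h ▸ subset_rfl⟩
    have h2 : (1 : ZMod 2) + 1 = 0 := by decide
    by_cases htD : t ∈ D <;> by_cases htB : t ∈ B
    · have : B.erase t ⊆ D ↔ D = B := by
        rw [← hsub, ← subset_insert_iff, insert_eq_self.2 htD]
      simp [htD, htB, this]
    · have : D ≠ B := by rintro rfl; exact htB htD
      simp [htD, htB, this]
    · have : D ≠ B := by rintro rfl; exact htD htB
      simp only [htD, htB, this, subset_insert_iff, not_false_eq_true, true_and, if_false]
      split_ifs <;> simp [h2]
    · have : B ⊆ insert t D ↔ D = B := by
        rw [← hsub, subset_insert_iff, erase_eq_of_notMem htB]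
      simp [htD, htB, this]
  rw [Finset.sum_comm] at h2
  have h4 : ∑ D ∈ 𝒟, ∑ B ∈ ℬ, (if D = B then (1 : ZMod 2) else 0) = 0 := by
    have h12 := congrArg₂ (· + ·) h1 h2
    simp only [add_zero, ← Finset.sum_add_distrib] at h12
    refine Eq.trans ?_ h12
    exact Finset.sum_congr rfl fun D hDm => Finset.sum_congr rfl fun B hBm => (h3 D hDm B hBm).symm
  simp only [Finset.sum_ite_eq, Finset.sum_boole] at h4
  rw [filter_mem_eq_inter] at h4
  exact (ZMod.natCast_eq_zero_iff_even).1 h4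

/-- A finite linear combination that vanishes has both signs when the vectors are nonnegative
and nonzero. -/
theorem exists_neg_coeff_of_relation {T ι : Type*} [Fintype T] {a : T → ι → ℝ}
    (ha : ∀ t i, 0 ≤ a t i) (ha' : ∀ t, ∃ i, 0 < a t i) {z : T → ℝ}
    (hz : ∑ t, z t • a t = 0) (hne : ∃ t, z t ≠ 0) : ∃ t, z t < 0 := by
  by_contra! h
  obtain ⟨t, ht⟩ := hne
  obtain ⟨i, hi⟩ := ha' t
  have h1 : ∑ t, z t * a t i = 0 := by simpa using congrFun hz i
  have h2 := (Finset.sum_eq_zero_iff_of_nonneg (fun t _ => mul_nonneg (h t) (ha t i))).1 h1 t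
    (mem_univ t)
  rcases mul_eq_zero.1 h2 with h3 | h3
  · exact ht h3
  · exact hi.ne' h3

/-- `B` is feasible for `b` if `b` lies in the cone spanned by the vectors indexed by `B`. -/
def ConeFeasible {T ι : Type*} [Fintype T] (a : T → ι → ℝ) (b : ι → ℝ) (B : Finset T) : Prop :=
  ∃ x : T → ℝ, (∀ t, 0 ≤ x t) ∧ (∀ t ∉ B, x t = 0) ∧ ∑ t, x t • a t = b

/-- `b` is not a linear combination of fewer than `m` of the vectors `a t`. -/
def IsGenericFor {T ι : Type*} [Fintype T] (a : T → ι → ℝ) (m : ℕ) (b : ι → ℝ) : Prop :=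
  ∀ (W : Finset T) (y : T → ℝ), (∀ t ∉ W, y t = 0) → ∑ t, y t • a t = b → m ≤ #W

theorem IsGenericFor.relation_eq_zero {T ι : Type*} [Fintype T] [DecidableEq T]
    {a : T → ι → ℝ} {m : ℕ} {b : ι → ℝ} (hb : IsGenericFor a m b) {G : Finset T}
    (hG : #G ≤ m) {x z : T → ℝ} (hx : ∀ t ∉ G, x t = 0) (hxb : ∑ t, x t • a t = b)
    (hz : ∀ t ∉ G, z t = 0) (hz0 : ∑ t, z t • a t = 0) (t : T) : z t = 0 := by
  by_contra hzt
  have htG : t ∈ G := by by_contra h; exact hzt (hz t h)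
  have := hb (G.erase t) (fun s => x s - x t / z t * z s) (fun s hs => by
    by_cases hst : s = t
    · subst hst; field_simp; ring
    · have : s ∉ G := fun h => hs (mem_erase.2 ⟨hst, h⟩)
      simp [hx s this, hz s this]) (by
    simp only [sub_smul, Finset.sum_sub_distrib, hxb, mul_smul, ← Finset.smul_sum, hz0]
    simp)
  have h2 := card_erase_lt_of_mem htG
  omega

theorem IsGenericFor.pos {T ι : Type*} [Fintype T] [DecidableEq T]
    {a : T → ι → ℝ} {m : ℕ} {b : ι → ℝ} (hb : IsGenericFor a m b) {G : Finset T}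
    (hG : #G ≤ m) {x : T → ℝ} (hx : ∀ t ∉ G, x t = 0) (hxb : ∑ t, x t • a t = b)
    (hx0 : ∀ t, 0 ≤ x t) {t : T} (ht : t ∈ G) : 0 < x t := by
  refine (hx0 t).lt_of_ne' fun h => ?_
  have := hb (G.erase t) x (fun s hs => by
    by_cases hst : s = t
    · rw [hst, h]
    · exact hx s fun h => hs (mem_erase.2 ⟨hst, h⟩)) hxb
  have h2 := card_erase_lt_of_mem ht
  omega

/-- Cardinal pivoting: from a feasible `m`-subset of an `(m + 1)`-set there is exactly one other. -/
theorem exists_unique_pivot {T ι : Type*} [Fintype T] [DecidableEq T] [Fintype ι]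
    {a : T → ι → ℝ} (ha : ∀ t i, 0 ≤ a t i) (ha' : ∀ t, ∃ i, 0 < a t i) {b : ι → ℝ}
    (hb : IsGenericFor a (Fintype.card ι) b) {F : Finset T} (hF : #F = Fintype.card ι + 1)
    {s : T} (hs : s ∈ F) (hfeas : ConeFeasible a b (F.erase s)) :
    ∃ s' ∈ F, s' ≠ s ∧ ∀ r ∈ F, ConeFeasible a b (F.erase r) ↔ r = s ∨ r = s' := by
  have hcard : ∀ r ∈ F, #(F.erase r) ≤ Fintype.card ι := fun r hr => by
    rw [card_erase_of_mem hr]; omega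
  obtain ⟨x, hx0, hxs, hxb⟩ := hfeas
  obtain ⟨z, hzF, hz0, hzs⟩ : ∃ z : T → ℝ, (∀ t ∉ F, z t = 0) ∧ ∑ t, z t • a t = 0 ∧ 0 < z s := by
    have hlt : Module.finrank ℝ (ι → ℝ) < Fintype.card F := by
      simp [hF]
    have hdep : ¬ LinearIndependent ℝ (fun t : F => a t) := fun h => by
      have := h.fintype_card_le_finrank
      omega
    obtain ⟨g, hg0, t, hgt⟩ := Fintype.not_linearIndependent_iff.1 hdep
    set z : T → ℝ := fun t => if h : t ∈ F then g ⟨t, h⟩ else 0 with hzdef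
    have hzF : ∀ t ∉ F, z t = 0 := fun t ht => by simp [hzdef, ht]
    have hz0 : ∑ t, z t • a t = 0 := by
      rw [← hg0, ← Finset.sum_subset (subset_univ F) (fun t _ ht => by rw [hzF t ht, zero_smul]),
        ← Finset.sum_coe_sort F]
      exact Finset.sum_congr rfl fun t _ => by simp [hzdef]
    have hzs : z s ≠ 0 := fun h => hgt <| by
      have := hb.relation_eq_zero (hcard s hs) hxs hxb (z := z) (fun r hr => by
        by_cases hrs : r = s
        · rw [hrs, h]
        · exact hzF r fun h => hr (mem_erase.2 ⟨hrs, h⟩)) hz0 t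
      simpa [hzdef] using this
    rcases hzs.lt_or_gt with h | h
    · exact ⟨-z, fun t ht => by simp [hzF t ht], by simp [hz0], by simpa using h⟩
    · exact ⟨z, hzF, hz0, h⟩
  have hxsum : ∀ θ : ℝ, ∑ t, (x t + θ * z t) • a t = b := fun θ => by
    simp only [add_smul, Finset.sum_add_distrib, hxb, mul_smul, ← Finset.smul_sum, hz0]
    simp
  obtain ⟨t₀, ht₀⟩ := exists_neg_coeff_of_relation ha ha' hz0 ⟨s, hzs.ne'⟩
  obtain ⟨s', hs'm, hmin⟩ := Finset.exists_min_image ({t | z t < 0} : Finset T)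
    (fun t => x t / (-z t)) ⟨t₀, by simpa using ht₀⟩
  have hzs' : z s' < 0 := by simpa using hs'm
  have hs'F : s' ∈ F := by by_contra h; exact hzs'.ne (hzF s' h)
  have hs's : s' ≠ s := by rintro rfl; exact lt_asymm hzs hzs'
  set θ := x s' / (-z s') with hθ
  have hθ0 : 0 ≤ θ := div_nonneg (hx0 s') (by linarith)
  have hnn : ∀ t, 0 ≤ x t + θ * z t := fun t => by
    rcases le_or_gt 0 (z t) with h | h
    · exact add_nonneg (hx0 t) (mul_nonneg hθ0 h)
    · have := hmin t (by simpa using h)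
      have h' : 0 < -z t := by linarith
      rw [le_div_iff₀ h'] at this
      linarith
  have hzero : x s' + θ * z s' = 0 := by
    rw [hθ]; have := hzs'.ne; field_simp; ring
  have hsupp : ∀ t ∉ F.erase s', x t + θ * z t = 0 := fun t ht => by
    by_cases hts : t = s'
    · rw [hts, hzero]
    · have htF : t ∉ F := fun h => ht (mem_erase.2 ⟨hts, h⟩)
      rw [hzF t htF, hxs t fun h => htF (mem_of_mem_erase h)]; simp
  refine ⟨s', hs'F, hs's, fun r hr => ⟨fun hfr => ?_, ?_⟩⟩
  · by_contra! hne
    obtain ⟨hrs, hrs'⟩ := hne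
    obtain ⟨x', hx'0, hx's, hx'b⟩ := hfr
    set η := x' s / z s
    have hrel := hb.relation_eq_zero (hcard s hs) hxs hxb
      (z := fun t => x' t - (x t + η * z t)) (fun t ht => by
        by_cases hts : t = s
        · subst hts
          have : η * z t = x' t := div_mul_cancel₀ _ hzs.ne'
          rw [hxs t ht, this]; ring
        · have htF : t ∉ F := fun h => ht (mem_erase.2 ⟨hts, h⟩)
          rw [hzF t htF, hxs t ht, hx's t fun h => htF (mem_of_mem_erase h)]; ring)
      (by simp only [sub_smul, Finset.sum_sub_distrib, hx'b, hxsum, sub_self])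
    have hη0 : 0 < η := div_pos (hb.pos (hcard r hr) hx's hx'b hx'0
      (mem_erase.2 ⟨Ne.symm hrs, hs⟩)) hzs
    have hr0 := hrel r
    rw [hx's r (by simp)] at hr0
    have hxr := hb.pos (hcard s hs) hxs hxb hx0 (mem_erase.2 ⟨hrs, hr⟩)
    have hzr : z r < 0 := by
      by_contra! h
      nlinarith [mul_nonneg hη0.le h]
    have hs'pos := hb.pos (hcard r hr) hx's hx'b hx'0 (mem_erase.2 ⟨Ne.symm hrs', hs'F⟩)
    have h1 := hrel s'
    have h2 : η < θ := by nlinarith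
    nlinarith [hnn r]
  · rintro (rfl | rfl)
    · exact ⟨x, hx0, hxs, hxb⟩
    · exact ⟨_, hnn, hsupp, hxsum θ⟩

open Classical in
theorem even_card_coneFeasible_subsets {T ι : Type*} [Fintype T] [DecidableEq T] [Fintype ι]
    {a : T → ι → ℝ} (ha : ∀ t i, 0 ≤ a t i) (ha' : ∀ t, ∃ i, 0 < a t i) {b : ι → ℝ}
    (hb : IsGenericFor a (Fintype.card ι) b) {F : Finset T} (hF : #F = Fintype.card ι + 1) :
    Even #{B : Finset T | (#B = Fintype.card ι ∧ ConeFeasible a b B) ∧ B ⊆ F} := by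
  have himg : ({B : Finset T | (#B = Fintype.card ι ∧ ConeFeasible a b B) ∧ B ⊆ F} :
      Finset (Finset T)) = ({r ∈ F | ConeFeasible a b (F.erase r)}).image F.erase := by
    ext B
    simp only [mem_filter, mem_univ, true_and, mem_image]
    constructor
    · rintro ⟨⟨hc, hf⟩, hBF⟩
      obtain ⟨r, hr, hrB⟩ := exists_mem_notMem_of_card_lt_card (s := B) (t := F) (by omega)
      have hBr : F.erase r = B := (eq_of_subset_of_card_le (subset_erase.2 ⟨hBF, hrB⟩)
        (by rw [card_erase_of_mem hr]; omega)).symm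
      exact ⟨r, ⟨hr, hBr ▸ hf⟩, hBr⟩
    · rintro ⟨r, ⟨hr, hf⟩, rfl⟩
      exact ⟨⟨by rw [card_erase_of_mem hr, hF]; rfl, hf⟩, erase_subset _ _⟩
  rw [himg, card_image_of_injOn]
  · obtain h | ⟨s, hs⟩ :=
      ({r ∈ F | ConeFeasible a b (F.erase r)} : Finset T).eq_empty_or_nonempty
    · simp [h]
    · rw [mem_filter] at hs
      obtain ⟨s', hs', hne, hiff⟩ := exists_unique_pivot ha ha' hb hF hs.1 hs.2
      have : ({r ∈ F | ConeFeasible a b (F.erase r)} : Finset T) = {s, s'} := by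
        ext r
        simp only [mem_filter, mem_insert, mem_singleton]
        exact ⟨fun h => (hiff r h.1).1 h.2, fun h => by
          have : r ∈ F := by rcases h with rfl | rfl; exacts [hs.1, hs']
          exact ⟨this, (hiff r this).2 h⟩⟩
      rw [this, card_pair hne.symm]
      exact even_two
  · exact (Finset.erase_injOn F).mono (coe_subset.2 (filter_subset _ _))

/-- `D` is dominating if every `t` is, in some row `i`, weakly below all of `D`. -/
def IsDominating {N T α : Type*} [LinearOrder α] (c : N → T → α) (D : Finset T) : Prop :=
  ∀ t, ∃ i, ∀ j ∈ D, c i t ≤ c i j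

/-- `t` is strictly above the row minima `c r (d r)` in every row but `x`. -/
def IsAboveExcept {N T α : Type*} [LinearOrder α] (c : N → T → α) (d : N → T) (x : N) (t : T) :
    Prop :=
  ∀ r, r ≠ x → c r (d r) < c r t

theorem exists_ne_map_eq_and_injOn_ne {N T : Type*} [Fintype N]
    {W : Finset T} (hcard : #W + 1 = Fintype.card N) {d : N → T} (hdW : ∀ i, d i ∈ W) :
    ∃ p q, p ≠ q ∧ d p = d q ∧ ∀ x, Set.InjOn d {r | r ≠ x} → x = p ∨ x = q := by
  obtain ⟨p, -, q, -, hpq, hdpq⟩ := exists_ne_map_eq_of_card_lt_of_maps_to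
    (s := univ) (t := W) (f := d) (by rw [card_univ]; omega) (fun i _ => hdW i)
  refine ⟨p, q, hpq, hdpq, fun x hx => ?_⟩
  by_contra! h
  exact hpq (hx h.1.symm h.2.symm hdpq)

theorem IsDominating.exists_eq_min {N T α : Type*} [LinearOrder α]
    {c : N → T → α} (hc : ∀ i, Function.Injective (c i)) {W : Finset T} {d : N → T}
    (hdW : ∀ i, d i ∈ W) (hd : ∀ i, ∀ j ∈ W, c i (d i) ≤ c i j) {w : T} (hw : w ∈ W)
    {i : N} (hi : ∀ j ∈ W, c i w ≤ c i j) : d i = w :=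
  hc i (le_antisymm (hd i w hw) (hi _ (hdW i)))

/-- If all elements of `W` are row minima in rows other than `x`, these rows have distinct
minima. -/
theorem injOn_ne_of_surj {N T : Type*} [Fintype N] [DecidableEq N]
    [DecidableEq T] {W : Finset T} (hcard : #W + 1 = Fintype.card N) {d : N → T} {x : N}
    (hsurj : ∀ w ∈ W, ∃ r, r ≠ x ∧ d r = w) : Set.InjOn d {r | r ≠ x} := by
  have h1 : W ⊆ (univ.erase x).image d := fun w hw => by
    obtain ⟨r, hr, rfl⟩ := hsurj w hw
    exact mem_image_of_mem _ (by simpa using hr)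
  have h2 : #((univ.erase x).image d) = #(univ.erase x) := by
    refine le_antisymm card_image_le (le_trans ?_ (card_le_card h1))
    rw [card_erase_of_mem (mem_univ x), card_univ]
    omega
  have := card_image_iff.1 h2
  exact this.mono (fun r hr => by simpa using hr)

/-- Ordinal pivoting: an element extending a wall `W` to a dominating set is the largest
in some row `x` among those above all other row minima. -/
theorem exists_max_of_isDominating_insert {N T α : Type*} [LinearOrder α] [Fintype N]
    [DecidableEq N] [DecidableEq T] {c : N → T → α} (hc : ∀ i, Function.Injective (c i)) {W : Finset T}
    (hcard : #W + 1 = Fintype.card N) {d : N → T}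
    (hdW : ∀ i, d i ∈ W) (hd : ∀ i, ∀ j ∈ W, c i (d i) ≤ c i j)
    {p q : N} (hpq : ∀ x, Set.InjOn d {r | r ≠ x} → x = p ∨ x = q) {k : T} (hk : k ∉ W)
    (h : IsDominating c (insert k W)) : ∃ x, (x = p ∨ x = q) ∧
      IsAboveExcept c d x k ∧ ∀ l, IsAboveExcept c d x l → c x l ≤ c x k := by
  obtain ⟨i, hi⟩ := h k
  have hinj : ∀ w ∈ W, ∃ r, r ≠ i ∧ d r = w ∧ c r w ≤ c r k := fun w hw => by
    obtain ⟨r, hr⟩ := h w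
    refine ⟨r, ?_, IsDominating.exists_eq_min hc hdW hd hw fun j hj => hr j (mem_insert_of_mem hj),
      hr k (mem_insert_self _ _)⟩
    rintro rfl
    have := hc r (le_antisymm (hr k (mem_insert_self _ _)) (hi w (mem_insert_of_mem hw)))
    exact hk (this ▸ hw)
  have hI := injOn_ne_of_surj hcard (d := d) (x := i) fun w hw =>
    let ⟨r, h1, h2, _⟩ := hinj w hw; ⟨r, h1, h2⟩
  refine ⟨i, hpq i hI, fun r hr => ?_, fun l hl => ?_⟩
  · obtain ⟨r', hr', hd', hle⟩ := hinj (d r) (hdW r)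
    obtain rfl : r' = r := hI hr' hr hd'
    refine hle.lt_of_ne fun h => hk ?_
    rw [← hc r' h]; exact hdW r'
  · obtain ⟨r, hr⟩ := h l
    by_cases hri : r = i
    · subst hri; exact hr k (mem_insert_self _ _)
    · exact absurd (hr (d r) (mem_insert_of_mem (hdW r))) (hl r hri).not_ge

theorem IsDominating.insert_of_max {N T α : Type*} [LinearOrder α]
    [DecidableEq T] {c : N → T → α} {W : Finset T}
    (hW : IsDominating c W) {d : N → T}
    (hdW : ∀ i, d i ∈ W) (hd : ∀ i, ∀ j ∈ W, c i (d i) ≤ c i j) {x : N} {k : T}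
    (hk : IsAboveExcept c d x k) (hmax : ∀ l, IsAboveExcept c d x l → c x l ≤ c x k) :
    IsDominating c (insert k W) := by
  intro l
  by_cases hl : IsAboveExcept c d x l
  · obtain ⟨r, hr⟩ := hW l
    obtain rfl : r = x := by
      by_contra h
      exact absurd (hr _ (hdW r)) (hl r h).not_ge
    exact ⟨r, fun j hj => (mem_insert.1 hj).elim (fun h => h ▸ hmax l hl) (hr j)⟩
  · simp only [IsAboveExcept, not_forall, not_lt] at hl
    obtain ⟨r, hr, hle⟩ := hl
    exact ⟨r, fun j hj => (mem_insert.1 hj).elim (fun h => h ▸ hle.trans (hk r hr).le)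
      fun hj => hle.trans (hd r j hj)⟩

/-- The order conditions on the slack columns `Sum.inl i` in Scarf's lemma. -/
structure IsScarfOrder {N E α : Type*} [LinearOrder α] (c : N → N ⊕ E → α) : Prop where
  injective : ∀ i, Function.Injective (c i)
  inl_self_lt : ∀ i e, c i (.inl i) < c i (.inr e)
  inr_lt_inl : ∀ i j e, j ≠ i → c i (.inr e) < c i (.inl j)

theorem IsScarfOrder.self_lt {N E α : Type*} [LinearOrder α] [Nonempty E] {c : N → N ⊕ E → α}
    (hc : IsScarfOrder c) {i : N} {t : N ⊕ E} (ht : t ≠ .inl i) : c i (.inl i) < c i t := by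
  obtain ⟨e⟩ := ‹Nonempty E›
  rcases t with j | e'
  · exact (hc.inl_self_lt i e).trans (hc.inr_lt_inl i j e fun h => ht (h ▸ rfl))
  · exact hc.inl_self_lt i e'

open Classical in
theorem even_card_isDominating_supersets {N E α : Type*} [LinearOrder α] [Fintype N]
    [Fintype E] [Nonempty E] {c : N → N ⊕ E → α} (hc : IsScarfOrder c)
    {W : Finset (N ⊕ E)} (hcard : #W + 1 = Fintype.card N) :
    Even #{D : Finset (N ⊕ E) | (#D = Fintype.card N ∧
      (IsDominating c D ∨ D = univ.image Sum.inl)) ∧ W ⊆ D} := by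
  set S : Finset (N ⊕ E) := univ.image Sum.inl with hS
  have hmemS : ∀ j : N, (.inl j : N ⊕ E) ∈ S := fun j => by simp [hS]
  have hScard : #S = Fintype.card N := by
    rw [hS, card_image_of_injective _ Sum.inl_injective, card_univ]
  have hSnd : ¬ IsDominating c S := fun h => by
    obtain ⟨e⟩ := ‹Nonempty E›
    obtain ⟨i, hi⟩ := h (.inr e)
    exact absurd (hi _ (hmemS i)) (hc.inl_self_lt i e).not_ge
  have hinsert : ∀ D : Finset (N ⊕ E), #D = Fintype.card N → W ⊆ D →
      ∃ k, k ∉ W ∧ D = insert k W := fun D hD hWD => by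
    obtain ⟨k, hk, hkW⟩ := exists_mem_notMem_of_card_lt_card (s := W) (t := D) (by omega)
    exact ⟨k, hkW, (eq_of_subset_of_card_le (insert_subset hk hWD)
      (by rw [card_insert_of_notMem hkW]; omega)).symm⟩
  have hinsert_inj : ∀ k k', k ∉ W → insert k W = insert k' W → k = k' := fun k k' hk h => by
    have : k ∈ insert k' W := h ▸ mem_insert_self _ _
    exact (mem_insert.1 this).resolve_right hk
  obtain rfl | hWne := W.eq_empty_or_nonempty
  · obtain ⟨i, hi⟩ := Fintype.card_eq_one_iff.1 (hcard.symm.trans (by simp))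
    obtain ⟨k, -, hk⟩ := exists_max_image (univ : Finset (N ⊕ E)) (c i) ⟨.inl i, mem_univ _⟩
    have hkdom : IsDominating c {k} := fun t =>
      ⟨i, fun j hj => mem_singleton.1 hj ▸ hk t (mem_univ t)⟩
    have : ({D : Finset (N ⊕ E) | (#D = Fintype.card N ∧
        (IsDominating c D ∨ D = S)) ∧ ∅ ⊆ D} : Finset _) = {{k}, S} := by
      ext D
      simp only [mem_filter, mem_univ, true_and, mem_insert, mem_singleton, empty_subset, and_true]
      constructor
      · rintro ⟨hD, hdom | rfl⟩
        · obtain ⟨k', -, rfl⟩ := hinsert D hD (empty_subset _)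
          obtain ⟨i', hi'⟩ := hdom k
          rw [hi i'] at hi'
          left
          rw [hc.injective i (le_antisymm (hi' k' (mem_insert_self _ _)) (hk k' (mem_univ _)))]
          rfl
        · exact Or.inr rfl
      · rintro (rfl | rfl)
        · exact ⟨by rw [← hcard]; simp, Or.inl hkdom⟩
        · exact ⟨hScard, Or.inr rfl⟩
    rw [this, card_pair fun h : {k} = S => hSnd (h ▸ hkdom)]
    exact even_two
  choose d hdW hd using fun i => exists_min_image W (c i) hWne
  by_cases hWS : W ⊆ S
  · obtain ⟨k₀, hk₀, hSk₀⟩ := hinsert S hScard hWS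
    obtain ⟨r, rfl⟩ : ∃ r : N, k₀ = .inl r := by
      have : k₀ ∈ S := hSk₀ ▸ mem_insert_self _ _
      simpa [hS, eq_comm] using this
    have hinlW : ∀ i, i ≠ r → (.inl i : N ⊕ E) ∈ W := fun i hi => by
      have := hSk₀ ▸ hmemS i
      exact (mem_insert.1 this).resolve_left fun h => hi (Sum.inl_injective h)
    have hdi : ∀ i, i ≠ r → d i = .inl i := fun i hi => by
      by_contra h
      exact absurd (hd i _ (hinlW i hi)) (hc.self_lt h).not_ge
    have hWdom : IsDominating c W := by
      rintro (i | e)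
      · by_cases hi : i = r
        · subst hi
          exact ⟨i, fun j hj => (hc.self_lt fun h => hk₀ (h ▸ hj)).le⟩
        · exact ⟨i, fun j hj => hdi i hi ▸ hd i j hj⟩
      · refine ⟨r, fun j hj => ?_⟩
        obtain ⟨j, rfl⟩ : ∃ j' : N, j = .inl j' := by simpa [hS, eq_comm] using hWS hj
        exact (hc.inr_lt_inl r j e fun h => hk₀ (h ▸ hj)).le
    obtain ⟨q, hdq⟩ : ∃ q, d r = .inl q := by simpa [hS, eq_comm] using hWS (hdW r)
    have hqr : q ≠ r := fun h => hk₀ (h ▸ hdq ▸ hdW r)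
    have hpq : ∀ x, Set.InjOn d {r | r ≠ x} → x = r ∨ x = q := fun x hx => by
      by_contra! h
      exact hqr (hx h.2.symm h.1.symm (by rw [hdi q hqr, hdq]))
    have hnq : ∀ l, ¬ IsAboveExcept c d q l := fun l hl => by
      have h1 := hl r hqr.symm
      rw [hdq] at h1
      rcases l with j | e
      · by_cases hj : j = r
        · subst hj
          exact absurd h1 (hc.self_lt fun h => hqr (Sum.inl_injective h)).not_gt
        · by_cases hjq : j = q
          · subst hjq; exact lt_irrefl _ h1
          · have := hl j hjq
            rw [hdi j hj] at this
            exact lt_irrefl _ this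
      · exact absurd h1 (hc.inr_lt_inl r q e hqr).not_gt
    have habove : ∀ e, IsAboveExcept c d r (.inr e) := fun e i hi => by
      rw [hdi i hi]; exact hc.inl_self_lt i e
    obtain ⟨k, hkm, hkmax⟩ := exists_max_image ({l | IsAboveExcept c d r l} : Finset (N ⊕ E))
      (c r) ⟨.inr (Classical.arbitrary E), by simpa using habove _⟩
    simp only [mem_filter, mem_univ, true_and] at hkm hkmax
    have hkW : k ∉ W := fun h => by
      obtain ⟨j, rfl⟩ : ∃ j, k = .inl j := by simpa [hS, eq_comm] using hWS h
      have hj : j ≠ r := fun h' => hk₀ (h' ▸ h)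
      have := hkm j hj
      rw [hdi j hj] at this
      exact lt_irrefl _ this
    have hkdom := hWdom.insert_of_max hdW hd hkm hkmax
    have : ({D : Finset (N ⊕ E) | (#D = Fintype.card N ∧
        (IsDominating c D ∨ D = S)) ∧ W ⊆ D} : Finset _) = {insert k W, S} := by
      ext D
      simp only [mem_filter, mem_univ, true_and, mem_insert, mem_singleton]
      constructor
      · rintro ⟨⟨hD, hdom | rfl⟩, hWD⟩
        · obtain ⟨k', hk', rfl⟩ := hinsert D hD hWD
          obtain ⟨x, rfl | rfl, hx1, hx2⟩ :=
            exists_max_of_isDominating_insert hc.injective hcard hdW hd hpq hk' hdom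
          · left
            rw [hc.injective x (le_antisymm (hkmax k' hx1) (hx2 k hkm))]
          · exact absurd hx1 (hnq k')
        · exact Or.inr rfl
      · rintro (rfl | rfl)
        · exact ⟨⟨by rw [card_insert_of_notMem hkW, hcard], Or.inl hkdom⟩, subset_insert _ _⟩
        · exact ⟨⟨hScard, Or.inr rfl⟩, hWS⟩
    rw [this, card_pair fun h : insert k W = S => hSnd (h ▸ hkdom)]
    exact even_two
  · by_cases hWdom : IsDominating c W
    · obtain ⟨p, q, hne, hdpq, hpq⟩ := exists_ne_map_eq_and_injOn_ne hcard hdW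
      obtain ⟨e, heW⟩ : ∃ e : E, (.inr e : N ⊕ E) ∈ W := by
        obtain ⟨t, htW, htS⟩ := not_subset.1 hWS
        rcases t with j | e
        · exact absurd (hmemS j) htS
        · exact ⟨e, htW⟩
      have habove : ∀ x, IsAboveExcept c d x (.inl x) := fun x r hr =>
        (hd r _ heW).trans_lt (hc.inr_lt_inl r x e hr.symm)
      choose k hkm hkmax using fun x => exists_max_image
        ({l | IsAboveExcept c d x l} : Finset (N ⊕ E)) (c x) ⟨.inl x, by simpa using habove x⟩
      simp only [mem_filter, mem_univ, true_and] at hkm hkmax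
      have hkW : ∀ x, (x = p ∨ x = q) → k x ∉ W := fun x hx h => by
        obtain ⟨r, hr⟩ := hWdom (k x)
        have hdr := IsDominating.exists_eq_min hc.injective hdW hd h hr
        obtain ⟨r', hr', hdr'⟩ : ∃ r', r' ≠ x ∧ d r' = k x := by
          by_cases hrx : r = x
          · subst hrx
            rcases hx with rfl | rfl
            · exact ⟨q, hne.symm, hdpq ▸ hdr⟩
            · exact ⟨p, hne, hdpq ▸ hdr⟩
          · exact ⟨r, hrx, hdr⟩
        have := hkm x r' hr'
        rw [hdr'] at this
        exact lt_irrefl _ this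
      have hkne : k p ≠ k q := fun h => by
        obtain ⟨r, hr⟩ := hWdom (k p)
        have h1 := hr _ (hdW r)
        by_cases hrp : r = p
        · exact absurd h1 (h ▸ hkm q r (hrp ▸ hne)).not_ge
        · exact absurd h1 (hkm p r hrp).not_ge
      have : ({D : Finset (N ⊕ E) | (#D = Fintype.card N ∧
          (IsDominating c D ∨ D = S)) ∧ W ⊆ D} : Finset _) =
          {insert (k p) W, insert (k q) W} := by
        ext D
        simp only [mem_filter, mem_univ, true_and, mem_insert, mem_singleton]
        constructor
        · rintro ⟨⟨hD, hdom | rfl⟩, hWD⟩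
          · obtain ⟨k', hk', rfl⟩ := hinsert D hD hWD
            obtain ⟨x, hx, hx1, hx2⟩ :=
              exists_max_of_isDominating_insert hc.injective hcard hdW hd hpq hk' hdom
            have := hc.injective x (le_antisymm (hkmax x k' hx1) (hx2 (k x) (hkm x)))
            rcases hx with rfl | rfl
            · exact Or.inl (by rw [this])
            · exact Or.inr (by rw [this])
          · exact absurd hWD hWS
        · have key : ∀ x, (x = p ∨ x = q) → (#(insert (k x) W) = Fintype.card N ∧
              (IsDominating c (insert (k x) W) ∨ insert (k x) W = S)) ∧ W ⊆ insert (k x) W :=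
            fun x hx => ⟨⟨by rw [card_insert_of_notMem (hkW x hx), hcard],
              Or.inl (hWdom.insert_of_max hdW hd (hkm x) (hkmax x))⟩, subset_insert _ _⟩
          rintro (rfl | rfl)
          · exact key p (Or.inl rfl)
          · exact key q (Or.inr rfl)
      rw [this, card_pair fun h => hkne (hinsert_inj _ _ (hkW p (Or.inl rfl)) h)]
      exact even_two
    · rw [filter_eq_empty_iff.2, card_empty]
      · exact Even.zero
      rintro D - ⟨⟨-, hdom | rfl⟩, hWD⟩
      · exact hWdom fun t => (hdom t).imp fun i hi j hj => hi j (hWD hj)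
      · exact hWS hWD

theorem dense_setOf_isGenericFor {T ι : Type*} [Fintype T] [Fintype ι] (a : T → ι → ℝ) :
    Dense {b | IsGenericFor a (Fintype.card ι) b} := by
  classical
  have hdense : Dense (⋂ W : {W : Finset T // #W < Fintype.card ι},
      ((Submodule.span ℝ (Set.range fun t : W.1 => a t) : Submodule ℝ (ι → ℝ)) :
        Set (ι → ℝ))ᶜ) := by
    refine dense_iInter_of_isOpen (fun W => (Submodule.closed_of_finiteDimensional _).isOpen_compl)
      fun W => interior_eq_empty_iff_dense_compl.1 ?_
    by_contra h
    have htop := Submodule.eq_top_of_nonempty_interior' _ (Set.nonempty_iff_ne_empty.2 h)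
    have hle := finrank_range_le_card (R := ℝ) (fun t : W.1 => a t)
    rw [Set.finrank, htop, finrank_top, Module.finrank_fintype_fun_eq_card, Fintype.card_coe] at hle
    exact absurd W.2 hle.not_gt
  refine hdense.mono fun b hb W y hy hyb => ?_
  by_contra! hlt
  refine Set.mem_iInter.1 hb ⟨W, hlt⟩ ?_
  rw [← hyb]
  refine Submodule.sum_mem _ fun t _ => ?_
  by_cases ht : t ∈ W
  · exact Submodule.smul_mem _ _ (Submodule.subset_span ⟨⟨t, ht⟩, rfl⟩)
  · rw [hy t ht, zero_smul]
    exact Submodule.zero_mem _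

theorem isClosed_setOf_coneFeasible {T ι : Type*} [Fintype T] [Fintype ι] {a : T → ι → ℝ}
    (ha : ∀ t i, 0 ≤ a t i) (ha' : ∀ t, ∃ i, 1 ≤ a t i) (B : Finset T) :
    IsClosed {b | ConeFeasible a b B} := by
  refine isClosed_of_closure_subset fun b hb => ?_
  set K : Set (T → ℝ) := Set.Icc 0 (fun _ => ‖b‖ + 1) ∩ {x | ∀ t ∉ B, x t = 0}
  have hK : IsCompact K := by
    refine isCompact_Icc.inter_right ?_
    simp only [Set.ofPred_forall]
    exact isClosed_iInter fun t => isClosed_iInter fun _ =>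
      isClosed_eq (continuous_apply t) continuous_const
  have hcont : Continuous fun x : T → ℝ => ∑ t, x t • a t := by fun_prop
  have hclosed := (hK.image hcont).isClosed
  have hsub : Metric.ball b 1 ∩ {b | ConeFeasible a b B} ⊆
      (fun x : T → ℝ => ∑ t, x t • a t) '' K := by
    rintro b' ⟨hb', x, hx0, hxB, hxb⟩
    refine ⟨x, ⟨⟨hx0, fun t => ?_⟩, hxB⟩, hxb⟩
    obtain ⟨i, hi⟩ := ha' t
    have h1 : ∑ s, x s * a s i = b' i := by rw [← hxb]; simp
    have h2 : x t * a t i ≤ b' i := h1 ▸ Finset.single_le_sum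
      (f := fun s => x s * a s i) (fun s _ => mul_nonneg (hx0 s) (ha s i)) (mem_univ t)
    have h3 : b' i ≤ ‖b'‖ := (le_abs_self _).trans (norm_le_pi_norm b' i)
    have h4 : ‖b'‖ ≤ ‖b‖ + 1 := by
      have := norm_le_norm_add_norm_sub' b' b
      rw [mem_ball_iff_norm] at hb'
      linarith
    nlinarith [hx0 t]
  have := closure_minimal hsub hclosed
    (Metric.isOpen_ball.inter_closure ⟨Metric.mem_ball_self one_pos, hb⟩)
  obtain ⟨x, ⟨⟨hx0, -⟩, hxB⟩, hxb⟩ := this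
  exact ⟨x, hx0, hxB, hxb⟩

/-- **Scarf's lemma**: there is a dominating feasible set of columns. -/
theorem exists_isDominating_coneFeasible {N E α : Type*} [LinearOrder α] [Fintype N] [Nonempty N]
    [DecidableEq N] [Fintype E] [Nonempty E] {c : N → N ⊕ E → α} (hc : IsScarfOrder c)
    {a : N ⊕ E → N → ℝ} (ha : ∀ t i, 0 ≤ a t i) (ha' : ∀ t, ∃ i, 1 ≤ a t i)
    (hinl : ∀ i, a (.inl i) = Pi.single i 1) :
    ∃ B : Finset (N ⊕ E), IsDominating c B ∧ ConeFeasible a (fun _ => 1) B := by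
  classical
  set U : Set (N → ℝ) := (⋂ i, {b | 0 < b i}) ∩
    ⋂ B : {B : Finset (N ⊕ E) // ¬ ConeFeasible a (fun _ => 1) B}, {b | ConeFeasible a b B}ᶜ
  have hU : IsOpen U :=
    (isOpen_iInter_of_finite fun i => isOpen_lt continuous_const (continuous_apply i)).inter
      (isOpen_iInter_of_finite fun B => (isClosed_setOf_coneFeasible ha ha' B.1).isOpen_compl)
  have h1U : (fun _ => 1) ∈ U := ⟨by simp, Set.mem_iInter.2 fun B => B.2⟩
  obtain ⟨b, hbU, hb⟩ := (dense_setOf_isGenericFor a).exists_mem_open hU ⟨_, h1U⟩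
  have hb0 : ∀ i, 0 < b i := fun i => Set.mem_iInter.1 hb.1 i
  have hfeas : ∀ B, ConeFeasible a b B → ConeFeasible a (fun _ => 1) B := fun B hB => by
    by_contra h
    exact Set.mem_iInter.1 hb.2 ⟨B, h⟩ hB
  set S : Finset (N ⊕ E) := univ.image Sum.inl with hS
  set 𝒟 : Finset (Finset (N ⊕ E)) := {D | #D = Fintype.card N ∧ (IsDominating c D ∨ D = S)}
    with h𝒟
  set ℬ : Finset (Finset (N ⊕ E)) := {B | #B = Fintype.card N ∧ ConeFeasible a b B} with hℬ
  have heven : Even #(𝒟 ∩ ℬ) := by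
    refine even_card_inter_of_even_walls (m := Fintype.card N) (by simp +contextual [h𝒟])
      (by simp +contextual [hℬ]) (fun W hW => ?_) (fun F hF => ?_)
    · rw [h𝒟, filter_filter]
      convert even_card_isDominating_supersets hc hW
    · rw [hℬ, filter_filter]
      convert even_card_coneFeasible_subsets ha
        (fun t => (ha' t).imp fun i hi => one_pos.trans_le hi) hbU hF
  have hScard : #S = Fintype.card N := by
    rw [hS, card_image_of_injective _ Sum.inl_injective, card_univ]
  have hSfeas : ConeFeasible a b S := by
    refine ⟨Sum.elim b 0, ?_, ?_, ?_⟩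
    · rintro (i | e)
      · exact (hb0 i).le
      · exact le_rfl
    · rintro (i | e) h
      · simp [hS] at h
      · rfl
    · ext i
      simp [Fintype.sum_sum_type, hinl, Finset.sum_apply, Pi.single_apply]
  have hSmem : S ∈ 𝒟 ∩ ℬ := by simp [h𝒟, hℬ, hScard, hSfeas]
  obtain ⟨B, hB, hBS⟩ : ∃ B ∈ 𝒟 ∩ ℬ, B ≠ S := by
    refine exists_mem_ne ?_ S
    have : 0 < #(𝒟 ∩ ℬ) := card_pos.2 ⟨S, hSmem⟩
    obtain ⟨r, hr⟩ := heven
    omega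
  simp only [h𝒟, hℬ, mem_inter, mem_filter, mem_univ, true_and] at hB
  exact ⟨B, hB.1.2.resolve_right hBS, hfeas B hB.2.2⟩

/-- Existence of fractional stable solutions for hypergraphs with weighted preferences. -/
theorem exists_fractional_stable {N E : Type*} [Fintype N] [Nonempty N] [DecidableEq N] [Fintype E]
    (S : E → Finset N) (hS : ∀ e, (S e).Nonempty) (w : E → N → ℝ) :
    ∃ lam : N ⊕ E → ℝ, (∀ t, 0 ≤ lam t) ∧
      (∀ i, ∑ t, (if i ∈ Sum.elim (fun j => {j}) S t then lam t else 0) = 1) ∧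
      ∀ e, ∃ i ∈ S e, ∀ t, lam t ≠ 0 → i ∈ Sum.elim (fun j => {j}) S t →
        ∃ e', t = .inr e' ∧ w e i ≤ w e' i := by
  rcases isEmpty_or_nonempty E with hE | hE
  · exact ⟨fun _ => 1, fun _ => zero_le_one, fun i => by rw [Fintype.sum_sum_type]; simp,
      fun e => hE.elim e⟩
  set S' : N ⊕ E → Finset N := Sum.elim (fun j => {j}) S with hS'
  set idx := Fintype.equivFin (N ⊕ E)
  set tag : N → N ⊕ E → ℕ := fun i => Sum.elim (fun j => if j = i then 0 else 3)
    (fun e => if i ∈ S e then 1 else 2) with htag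
  set val : N → N ⊕ E → ℝ := fun i => Sum.elim (fun _ => 0) (fun e => w e i)
  set c : N → N ⊕ E → ℕ ×ₗ ℝ ×ₗ ℕ := fun i t => toLex (tag i t, toLex (val i t, (idx t : ℕ)))
    with hcdef
  have hlt : ∀ i t t', tag i t < tag i t' → c i t < c i t' := fun i t t' h =>
    Prod.Lex.toLex_lt_toLex.2 (Or.inl h)
  have hc : IsScarfOrder c := by
    refine ⟨fun i t t' h => ?_, fun i e => hlt _ _ _ ?_, fun i j e hj => hlt _ _ _ ?_⟩
    · simpa [hcdef, Fin.val_inj, and_assoc] using congrArg (fun z => (ofLex (ofLex z).2).2) h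
    · simp only [htag, Sum.elim_inl, Sum.elim_inr, if_true]; split_ifs <;> norm_num
    · simp only [htag, Sum.elim_inl, Sum.elim_inr, if_neg hj]; split_ifs <;> norm_num
  obtain ⟨B, hdom, x, hx0, hxB, hxb⟩ := exists_isDominating_coneFeasible hc
    (a := fun t i => if i ∈ S' t then 1 else 0) (fun t i => by positivity)
    (fun t => by
      have : (S' t).Nonempty := by
        rcases t with j | e
        · exact singleton_nonempty j
        · exact hS e
      obtain ⟨i, hi⟩ := this
      exact ⟨i, by simp [hi]⟩)
    (fun i => by ext j; simp [hS', Pi.single_apply])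
  have hsum : ∀ i, ∑ t, (if i ∈ S' t then x t else 0) = 1 := fun i => by
    simpa using congrFun hxb i
  refine ⟨x, hx0, hsum, fun e => ?_⟩
  obtain ⟨i, hi⟩ := hdom (.inr e)
  have hi' : ∀ t, x t ≠ 0 → c i (.inr e) ≤ c i t := fun t ht => hi t (by
    by_contra h; exact ht (hxB t h))
  have htag_le : ∀ t, i ∈ S' t → tag i t ≤ 1 := by
    rintro (j | e') h
    · simp only [hS', Sum.elim_inl, mem_singleton] at h
      simp [htag, h]
    · simp only [hS', Sum.elim_inr] at h
      simp [htag, h]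
  obtain ⟨t, ht, hit⟩ : ∃ t, x t ≠ 0 ∧ i ∈ S' t := by
    obtain ⟨t, -, ht⟩ := exists_ne_zero_of_sum_ne_zero ((hsum i).trans_ne one_ne_zero)
    by_cases h : i ∈ S' t
    · exact ⟨t, by simpa [h] using ht, h⟩
    · simp [h] at ht
  have hie : i ∈ S e := by
    by_contra h
    refine absurd (hi' t ht) (hlt _ _ _ ((htag_le t hit).trans_lt ?_)).not_ge
    simp [htag, h]
  refine ⟨i, hie, fun t ht hit => ?_⟩
  have hle := hi' t ht
  rcases t with j | e'
  · simp only [hS', Sum.elim_inl, mem_singleton] at hit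
    exact absurd (hit ▸ hc.inl_self_lt i e) hle.not_gt
  · simp only [hS', Sum.elim_inr] at hit
    refine ⟨e', rfl, ?_⟩
    have h1 : tag i (.inr e) = tag i (.inr e') := by simp [htag, hie, hit]
    have h2 := (Prod.Lex.toLex_le_toLex.1 hle).resolve_left h1.not_lt
    rcases Prod.Lex.toLex_le_toLex.1 h2.2 with h | h
    · exact h.le
    · exact h.1.le

/-- A balanced combination of coalition designs is a design of the grand coalition. -/
theorem sum_smul_mem_designSpace_univ {K J N T : Type*} [Fintype J] [Fintype N] [DecidableEq N]
    [Fintype T] {A : K → J → ℝ} {b : N → K → ℝ} {S : T → Finset N} {y : T → J → ℝ}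
    (hy : ∀ t, y t ∈ designSpace A b (S t)) {lam : T → ℝ} (h0 : ∀ t, 0 ≤ lam t)
    (h1 : ∀ i, ∑ t, (if i ∈ S t then lam t else 0) = 1) :
    ∑ t, lam t • y t ∈ designSpace A b univ := by
  refine ⟨fun j => ?_, fun k => ?_⟩
  · simp only [Finset.sum_apply, Pi.smul_apply, smul_eq_mul]
    exact Finset.sum_nonneg fun t _ => mul_nonneg (h0 t) ((hy t).1 j)
  · calc ∑ j, A k j * (∑ t, lam t • y t) j = ∑ t, lam t * ∑ j, A k j * y t j := by
          simp only [Finset.sum_apply, Pi.smul_apply, smul_eq_mul, Finset.mul_sum]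
          rw [Finset.sum_comm]
          exact Finset.sum_congr rfl fun t _ => Finset.sum_congr rfl fun j _ => by ring
      _ ≤ ∑ t, lam t * ∑ i ∈ S t, b i k :=
          Finset.sum_le_sum fun t _ => mul_le_mul_of_nonneg_left ((hy t).2 k) (h0 t)
      _ = ∑ t, ∑ i, (if i ∈ S t then lam t else 0) * b i k := by
          refine Finset.sum_congr rfl fun t _ => ?_
          simp [Finset.mul_sum, ite_mul]
      _ = ∑ i, b i k := by
          rw [Finset.sum_comm]
          exact Finset.sum_congr rfl fun i _ => by rw [← Finset.sum_mul, h1, one_mul]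

/-- With nonnegative valuations, a balanced combination of designs gives player `i` at least
what every coalition of positive weight containing `i` gives. -/
theorem le_valuation_sum_smul {K J N T : Type*} [Fintype J] [DecidableEq N]
    [Fintype T] {A : K → J → ℝ} {b : N → K → ℝ} {S : T → Finset N} {y : T → J → ℝ}
    (hy : ∀ t, y t ∈ designSpace A b (S t)) {lam : T → ℝ} (h0 : ∀ t, 0 ≤ lam t) {i : N}
    (h1 : ∑ t, (if i ∈ S t then lam t else 0) = 1) {v : J → ℝ} (hv : ∀ j, 0 ≤ v j) {g : ℝ}
    (hg : ∀ t, lam t ≠ 0 → i ∈ S t → g ≤ ∑ j, v j * y t j) :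
    g ≤ ∑ j, v j * (∑ t, lam t • y t) j := by
  calc g = ∑ t, (if i ∈ S t then lam t else 0) * g := by rw [← Finset.sum_mul, h1, one_mul]
    _ ≤ ∑ t, lam t * ∑ j, v j * y t j := by
        refine Finset.sum_le_sum fun t _ => ?_
        split_ifs with h
        · by_cases ht : lam t = 0
          · simp [ht]
          · exact mul_le_mul_of_nonneg_left (hg t ht h) (h0 t)
        · rw [zero_mul]
          exact mul_nonneg (h0 t) (Finset.sum_nonneg fun j _ => mul_nonneg (hv j) ((hy t).1 j))
    _ = ∑ j, v j * (∑ t, lam t • y t) j := by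
        simp only [Finset.sum_apply, Pi.smul_apply, smul_eq_mul, Finset.mul_sum]
        rw [Finset.sum_comm]
        exact Finset.sum_congr rfl fun j _ => Finset.sum_congr rfl fun t _ => by ring

/-- Some design of the grand coalition is not improved upon by any of finitely many coalition
designs. -/
theorem exists_design_not_blocked {K J N E : Type*} [Fintype J] [Fintype N] [Nonempty N]
    [DecidableEq N] [Fintype E] {A : K → J → ℝ} {b : N → K → ℝ} {v : N → J → ℝ}
    (hne : ∀ i : N, (designSpace A b {i}).Nonempty) (hv : ∀ i j, 0 ≤ v i j)
    {S : E → Finset N} (hS : ∀ e, (S e).Nonempty) {y : E → J → ℝ}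
    (hy : ∀ e, y e ∈ designSpace A b (S e)) :
    ∃ x ∈ designSpace A b univ, ∀ e, ∃ i ∈ S e, ∑ j, v i j * y e j ≤ ∑ j, v i j * x j := by
  classical
  choose z hz using hne
  let E' := {e : E // ∀ i ∈ S e, ∑ j, v i j * z i j < ∑ j, v i j * y e j}
  obtain ⟨lam, h0, h1, hst⟩ := exists_fractional_stable (fun e : E' => S e.1) (fun e => hS e.1)
    (fun e i => ∑ j, v i j * y e.1 j)
  set y' : N ⊕ E' → J → ℝ := Sum.elim z fun e => y e.1
  have hy' : ∀ t, y' t ∈ designSpace A b (Sum.elim (fun j => {j}) (fun e : E' => S e.1) t) := by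
    rintro (i | e)
    · exact hz i
    · exact hy e.1
  refine ⟨∑ t, lam t • y' t, sum_smul_mem_designSpace_univ hy' h0 h1, fun e => ?_⟩
  by_cases he : ∀ i ∈ S e, ∑ j, v i j * z i j < ∑ j, v i j * y e j
  · obtain ⟨i, hi, hit⟩ := hst ⟨e, he⟩
    refine ⟨i, hi, le_valuation_sum_smul hy' h0 (h1 i) (hv i) fun t ht hmem => ?_⟩
    obtain ⟨e', rfl, hle⟩ := hit t ht hmem
    exact hle
  · push Not at he
    obtain ⟨i, hi, hle⟩ := he
    refine ⟨i, hi, hle.trans (le_valuation_sum_smul hy' h0 (h1 i) (hv i) ?_)⟩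
    rintro (i' | e') - hmem
    · simp only [Sum.elim_inl, mem_singleton] at hmem
      subst hmem
      exact le_rfl
    · exact (e'.2 i hmem).le

theorem isClosed_designSpace {K J N : Type*} [Fintype J] (A : K → J → ℝ) (b : N → K → ℝ)
    (S : Finset N) : IsClosed (designSpace A b S) := by
  have : designSpace A b S = (⋂ j, {x | 0 ≤ x j}) ∩
      ⋂ k, {x | (∑ j, A k j * x j) ≤ ∑ i ∈ S, b i k} := by
    ext x; simp [designSpace]
  rw [this]
  refine (isClosed_iInter fun j => isClosed_le continuous_const (continuous_apply j)).inter
    (isClosed_iInter fun k => isClosed_le (by fun_prop) continuous_const)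

/-- The recession cone of a nonempty bounded design space is trivial. -/
theorem eq_zero_of_recession {K J N : Type*} [Fintype J] {A : K → J → ℝ} {b : N → K → ℝ}
    {S : Finset N} (hne : (designSpace A b S).Nonempty)
    (hbd : Bornology.IsBounded (designSpace A b S)) {z : J → ℝ} (hz : ∀ j, 0 ≤ z j)
    (hAz : ∀ k, ∑ j, A k j * z j ≤ 0) : z = 0 := by
  obtain ⟨x, hx⟩ := hne
  obtain ⟨R, hR⟩ := hbd.exists_norm_le
  ext j
  by_contra hzj
  have hpos : 0 < z j := (hz j).lt_of_ne' hzj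
  have hR0 : 0 ≤ R := (norm_nonneg x).trans (hR x hx)
  set s := (R + 1) / z j
  have hs : 0 ≤ s := by positivity
  have hmem : x + s • z ∈ designSpace A b S := by
    refine ⟨fun i => add_nonneg (hx.1 i) (mul_nonneg hs (hz i)), fun k => ?_⟩
    have : ∑ i, A k i * (x + s • z) i = ∑ i, A k i * x i + s * ∑ i, A k i * z i := by
      rw [Finset.mul_sum, ← Finset.sum_add_distrib]
      exact Finset.sum_congr rfl fun i _ => by
        simp only [Pi.add_apply, Pi.smul_apply, smul_eq_mul]; ring
    rw [this]
    have := mul_nonpos_of_nonneg_of_nonpos hs (hAz k)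
    linarith [hx.2 k]
  have h1 := (le_abs_self _).trans ((norm_le_pi_norm (x + s • z) j).trans (hR _ hmem))
  have h2 : s * z j = R + 1 := div_mul_cancel₀ _ hzj
  have h3 := hx.1 j
  simp only [Pi.add_apply, Pi.smul_apply, smul_eq_mul] at h1
  linarith

theorem isCompact_designSpace {K J N : Type*} [Fintype J] [Fintype K] {A : K → J → ℝ}
    {b : N → K → ℝ} (hrec : ∀ z : J → ℝ, (∀ j, 0 ≤ z j) → (∀ k, ∑ j, A k j * z j ≤ 0) → z = 0)
    (S : Finset N) : IsCompact (designSpace A b S) := by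
  set f : (J → ℝ) → ℝ := fun z => ∑ k, max 0 (∑ j, A k j * z j) with hf
  have hfc : Continuous f := by fun_prop
  obtain ⟨δ, hδ, hmin⟩ := (isCompact_stdSimplex ℝ J).exists_forall_le' hfc.continuousOn (a := 0)
    fun z hz => by
      refine (Finset.sum_nonneg fun k _ => le_max_left _ _).lt_of_ne' fun h => ?_
      have h1 := (Finset.sum_eq_zero_iff_of_nonneg (fun k _ => le_max_left _ _)).1 h
      have := hrec z hz.1 fun k => (le_max_right _ _).trans_eq (h1 k (mem_univ k))
      have h2 := hz.2
      simp [this] at h2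
  set C := ∑ k, max 0 (∑ i ∈ S, b i k) with hC
  have hbound : ∀ x ∈ designSpace A b S, ∑ j, x j ≤ C / δ := fun x hx => by
    have hC0 : 0 ≤ C := Finset.sum_nonneg fun k _ => le_max_left _ _
    rcases (Finset.sum_nonneg fun j _ => hx.1 j : 0 ≤ ∑ j, x j).eq_or_lt with h | h
    · rw [← h]; positivity
    · set s := ∑ j, x j with hs
      have hmem : s⁻¹ • x ∈ stdSimplex ℝ J := by
        refine ⟨fun j => mul_nonneg (inv_nonneg.2 h.le) (hx.1 j), ?_⟩
        simp only [Pi.smul_apply, smul_eq_mul, ← Finset.mul_sum]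
        exact inv_mul_cancel₀ h.ne'
      have h1 := hmin _ hmem
      have h2 : f (s⁻¹ • x) = s⁻¹ * f x := by
        simp only [hf, Finset.mul_sum, Pi.smul_apply, smul_eq_mul]
        refine Finset.sum_congr rfl fun k _ => ?_
        rw [mul_max_of_nonneg _ _ (inv_nonneg.2 h.le), mul_zero, Finset.mul_sum]
        congr 1
        exact Finset.sum_congr rfl fun j _ => by ring
      have h3 : f x ≤ C := Finset.sum_le_sum fun k _ => max_le_max le_rfl (hx.2 k)
      rw [h2, inv_mul_eq_div, le_div_iff₀ h] at h1
      rw [le_div_iff₀ hδ]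
      linarith
  refine (isCompact_Icc (a := (0 : J → ℝ)) (b := fun _ => C / δ)).of_isClosed_subset
    (isClosed_designSpace A b S) fun x hx => ⟨hx.1, fun j => ?_⟩
  exact (Finset.single_le_sum (fun j _ => hx.1 j) (mem_univ j)).trans (hbound x hx)

/-- The valuations of an unblocked design form a core element. -/
theorem mem_core_of_not_blocked {K J N : Type*} [Fintype J] [Fintype N]
    {A : K → J → ℝ} {b : N → K → ℝ} {v : N → J → ℝ} {x : J → ℝ}
    (hx : x ∈ designSpace A b univ)
    (h : ∀ S : Finset N, S.Nonempty → ∀ y ∈ designSpace A b S,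
      ∃ i ∈ S, ∑ j, v i j * y j ≤ ∑ j, v i j * x j) :
    (fun i => ∑ j, v i j * x j) ∈ core A b v := by
  refine ⟨⟨x, hx, fun i _ => le_rfl⟩, ?_⟩
  simp only [Set.mem_iUnion, not_exists]
  intro S hS hmem
  set u : N → ℝ := fun i => ∑ j, v i j * x j
  obtain ⟨ε, hε, hball⟩ := Metric.isOpen_iff.1 isOpen_interior u hmem
  have hu : (fun i => u i + ε / 2) ∈ Metric.ball u ε := by
    refine (dist_pi_lt_iff hε).2 fun i => ?_
    rw [Real.dist_eq, add_sub_cancel_left, abs_of_pos (by positivity)]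
    exact half_lt_self hε
  obtain ⟨y, hy, hle⟩ := interior_subset (hball hu)
  obtain ⟨i, hi, hyx⟩ := h S hS y hy
  have := hle i hi
  simp only [u] at this
  linarith

theorem core_nonempty_of_nonneg_valuations {K J N : Type*}
    [Fintype J] [Fintype K] [Fintype N] [Nonempty N] [DecidableEq N]
    {A : K → J → ℝ} {b : N → K → ℝ} {v : N → J → ℝ}
    (hne : ∀ i : N, (designSpace A b {i}).Nonempty)
    (hbd : ∀ i : N, Bornology.IsBounded (designSpace A b {i}))
    (hv : ∀ i : N, ∀ j : J, 0 ≤ v i j) : (core A b v).Nonempty := by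
  let i₀ := Classical.arbitrary N
  have hcompact : IsCompact (designSpace A b univ) := isCompact_designSpace
    (fun z hz hAz => eq_zero_of_recession (hne i₀) (hbd i₀) hz hAz) univ
  let I := {p : Finset N × (J → ℝ) // p.1.Nonempty ∧ p.2 ∈ designSpace A b p.1}
  obtain ⟨x, hx, hxI⟩ := hcompact.inter_iInter_nonempty
    (fun p : I => ⋃ i ∈ p.1.1, {x | ∑ j, v i j * p.1.2 j ≤ ∑ j, v i j * x j})
    (fun p => isClosed_biUnion_finset fun i _ =>
      isClosed_le continuous_const (by fun_prop))
    (fun F => by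
      obtain ⟨x, hx, hxF⟩ := exists_design_not_blocked (E := F) hne hv
        (S := fun p => p.1.1.1) (fun p => p.1.2.1) (y := fun p => p.1.1.2) (fun p => p.1.2.2)
      refine ⟨x, hx, Set.mem_iInter₂.2 fun p hp => ?_⟩
      obtain ⟨i, hi, hle⟩ := hxF ⟨p, hp⟩
      exact Set.mem_iUnion₂.2 ⟨i, hi, hle⟩)
  refine ⟨_, mem_core_of_not_blocked hx fun S hS y hy => ?_⟩
  obtain ⟨i, hi, hle⟩ := Set.mem_iUnion₂.1 (Set.mem_iInter.1 hxI ⟨(S, y), hS, hy⟩)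
  exact ⟨i, hi, hle⟩

/-- If every `X({i})` is nonempty and bounded and all valuations are componentwise
nonnegative, then the NTU LP game is balanced and its core is nonempty. -/
theorem ntulp_nonneg_valuations_balanced_core_nonempty {K J N : Type*}
    [Fintype J] [Fintype K] [Fintype N] [Nonempty N] [DecidableEq N]
    (A : K → J → ℝ) (b : N → K → ℝ) (v : N → J → ℝ)
    (hne : ∀ i : N, (designSpace A b {i}).Nonempty)
    (hbd : ∀ i : N, Bornology.IsBounded (designSpace A b {i}))
    (hv : ∀ i : N, ∀ j : J, 0 ≤ v i j) :
    (∀ (𝒮 : Finset (Finset N)) (lam : Finset N → ℝ),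
      (∀ S ∈ 𝒮, S.Nonempty) → (∀ S ∈ 𝒮, 0 ≤ lam S) →
      (∀ i : N, ∑ S ∈ 𝒮.filter (fun S => i ∈ S), lam S = 1) →
      (⋂ S ∈ 𝒮, utilitySpace A b v S) ⊆ utilitySpace A b v Finset.univ) ∧
    (core A b v).Nonempty := by
  refine ⟨fun 𝒮 lam _ h0 h1 u hu => ?_, core_nonempty_of_nonneg_valuations hne hbd hv⟩
  have hmem : ∀ S : 𝒮, u ∈ utilitySpace A b v S.1 := fun S => Set.mem_iInter₂.1 hu S.1 S.2
  choose y hy hle using hmem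
  have h0' : ∀ S : 𝒮, 0 ≤ lam S := fun S => h0 S.1 S.2
  have h1' : ∀ i, ∑ S : 𝒮, (if i ∈ S.1 then lam S else 0) = 1 := fun i => by
    rw [Finset.sum_coe_sort 𝒮 (fun S => if i ∈ S then lam S else 0), ← Finset.sum_filter, h1 i]
  exact ⟨_, sum_smul_mem_designSpace_univ hy h0' h1', fun i _ =>
    le_valuation_sum_smul hy h0' (h1' i) (hv i) fun S _ hi => hle S i hi⟩
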